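/- Let K be a quasiminimal abstract elementary class, let M ∈ K, and let ā₁, ā₂, b̄₁ be finite sequences of elements of M. If ā₁ and ā₂ have the same Galois type over the empty set in M (equivalently, since K admits intersections, there is an isomorphism from cl^M(ā₁) onto cl^M(ā₂) sending ā₁ to ā₂), then there exists a finite sequence b̄₂ of elements of M such that the concatenations ā₁b̄₁ and ā₂b̄₂ have the same Galois type over the empty set in M (equivalently, there is an isomorphism from cl^M(ā₁b̄₁) onto cl^M(ā₂b̄₂) sending ā₁b̄₁ to ā₂b̄₂). -/

import Mathlib

open Cardinal Set FirstOrder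

universe u

/-- A `τ`-structure whose universe is a subset of a fixed domain `Ω`. -/
def ModelOn (L : FirstOrder.Language.{u, u}) (Ω : Type u) : Type u :=
  Σ s : Set Ω, L.Structure s

variable {L : FirstOrder.Language.{u, u}} {Ω : Type u}

noncomputable instance modelStr (M : ModelOn L Ω) : L.Structure ↥M.1 := M.2

/-- `M` is a substructure of `N`: the universe of `M` is a subset of that of `N`
and the inclusion map is an `L`-embedding. -/
def ModelOn.IsSub (M N : ModelOn L Ω) : Prop :=
  M.1 ⊆ N.1 ∧ ∃ e : ↥M.1 ↪[L] ↥N.1, ∀ x : ↥M.1, (e x : Ω) = (x : Ω)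

/-- An abstract elementary class whose models have universes contained in `Ω`. -/
structure AECStr (L : FirstOrder.Language.{u, u}) (Ω : Type u) where
  /-- the class of models -/
  mem : Set (ModelOn L Ω)
  /-- the strong substructure relation `≤ₖ` -/
  le : ModelOn L Ω → ModelOn L Ω → Prop
  /-- the Löwenheim-Skolem-Tarski number -/
  LS : Cardinal.{u}
  le_refl : ∀ M ∈ mem, le M M
  le_antisymm : ∀ {M N}, le M N → le N M → M = N
  le_trans : ∀ {M N P}, le M N → le N P → le M P
  le_mem_left : ∀ {M N}, le M N → M ∈ mem
  le_mem_right : ∀ {M N}, le M N → N ∈ mem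
  /-- `M ≤ₖ N` implies that `M` is a substructure of `N` -/
  le_isSub : ∀ {M N}, le M N → ModelOn.IsSub M N
  /-- `K` and `≤ₖ` respect isomorphisms: if `M ≤ₖ N` and `f : N ≅ N'`, then
  `f[M] ≤ₖ N'` (phrased as: there is `M' ≤ₖ N'` and an isomorphism `g : M ≅ M'`
  agreeing with `f` on `M`). -/
  iso_resp : ∀ {M N N' : ModelOn L Ω}, le M N → ∀ f : ↥N.1 ≃[L] ↥N'.1,
    ∃ (M' : ModelOn L Ω) (g : ↥M.1 ≃[L] ↥M'.1), le M' N' ∧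
      ∀ (x : ↥M.1) (y : ↥N.1), (y : Ω) = (x : Ω) → ((g x : Ω)) = ((f y : Ω))
  /-- coherence -/
  coherence : ∀ {M₀ M₁ M₂}, le M₀ M₂ → le M₁ M₂ → M₀.1 ⊆ M₁.1 → le M₀ M₁
  /-- Tarski-Vaught chain axioms: a `≤ₖ`-directed system has a union which is in
  the class, lies above every member of the system, and is below any common
  extension of the system. -/
  chain_union : ∀ {ι : Type u} (Mi : ι → ModelOn L Ω), Nonempty ι →
    (∀ i j : ι, ∃ k, le (Mi i) (Mi k) ∧ le (Mi j) (Mi k)) →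
    ∃ M : ModelOn L Ω, M.1 = ⋃ i, (Mi i).1 ∧ (∀ i, le (Mi i) M) ∧
      ∀ N, (∀ i, le (Mi i) N) → le M N
  /-- `LS ≥ |τ| + ℵ₀` -/
  LS_ge : L.card + ℵ₀ ≤ LS
  /-- the Löwenheim-Skolem-Tarski axiom -/
  LST : ∀ M ∈ mem, ∀ A : Set Ω, A ⊆ M.1 →
    ∃ M₀, le M₀ M ∧ A ⊆ M₀.1 ∧ #M₀.1 ≤ #A + LS
  /-- `LS` is the least such cardinal -/
  LS_min : ∀ μ : Cardinal.{u}, L.card + ℵ₀ ≤ μ →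
    (∀ M ∈ mem, ∀ A : Set Ω, A ⊆ M.1 →
      ∃ M₀, le M₀ M ∧ A ⊆ M₀.1 ∧ #M₀.1 ≤ #A + μ) → LS ≤ μ

/-- `cl^N(A)`: the intersection of the universes of all `M ≤ₖ N` containing `A`. -/
def aecCl (K : AECStr L Ω) (N : ModelOn L Ω) (A : Set Ω) : Set Ω :=
  {x : Ω | ∀ M : ModelOn L Ω, K.le M N → A ⊆ M.1 → x ∈ M.1}

/-- `N` admits intersections: for every `A ⊆ |N|`, `cl^N(A)` is the universe of
some `M ≤ₖ N`. -/
def AdmitsInter (K : AECStr L Ω) (N : ModelOn L Ω) : Prop :=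
  ∀ A : Set Ω, A ⊆ N.1 → ∃ M : ModelOn L Ω, K.le M N ∧ M.1 = aecCl K N A

/-- There is a `K`-embedding of `M` into `N` fixing `F` pointwise: an isomorphism
from `M` onto some `M' ≤ₖ N` which is the identity on `F`. -/
def KEmbedFixing (K : AECStr L Ω) (M N : ModelOn L Ω) (F : Set Ω) : Prop :=
  ∃ M' : ModelOn L Ω, K.le M' N ∧
    ∃ g : ↥M.1 ≃[L] ↥M'.1, ∀ x : ↥M.1, (x : Ω) ∈ F → ((g x : Ω)) = (x : Ω)

/-- Uniqueness of the generic type, via the characterization of Galois types in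
classes admitting intersections: whenever `M ≤ₖ N₁`, `M ≤ₖ N₂` are countable
and `a₁ ∈ |N₁| \ |M|`, `a₂ ∈ |N₂| \ |M|`, there is an isomorphism from
`cl^{N₁}(|M| ∪ {a₁})` onto `cl^{N₂}(|M| ∪ {a₂})` fixing `M` pointwise and
sending `a₁` to `a₂`. -/
def GenericUnique (K : AECStr L Ω) : Prop :=
  ∀ M N₁ N₂ : ModelOn L Ω, K.le M N₁ → K.le M N₂ →
    #N₁.1 ≤ ℵ₀ → #N₂.1 ≤ ℵ₀ →
    ∀ a₁ a₂ : Ω, a₁ ∈ N₁.1 \ M.1 → a₂ ∈ N₂.1 \ M.1 →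
    ∃ M₁ M₂ : ModelOn L Ω, K.le M₁ N₁ ∧ K.le M₂ N₂ ∧
      M₁.1 = aecCl K N₁ (M.1 ∪ {a₁}) ∧ M₂.1 = aecCl K N₂ (M.1 ∪ {a₂}) ∧
      ∃ g : ↥M₁.1 ≃[L] ↥M₂.1,
        (∀ x : ↥M₁.1, (x : Ω) ∈ M.1 → ((g x : Ω)) = (x : Ω)) ∧
        (∀ x : ↥M₁.1, (x : Ω) = a₁ → ((g x : Ω)) = a₂)

/-- A quasiminimal AEC: countable `LS`, a prime model, countable models admit
intersections, and uniqueness of the generic type over countable models. -/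
def IsQuasiminimal (K : AECStr L Ω) : Prop :=
  K.LS = ℵ₀ ∧
  (∃ M ∈ K.mem, ∀ N ∈ K.mem, KEmbedFixing K M N ∅) ∧
  (∀ N ∈ K.mem, #N.1 ≤ ℵ₀ → AdmitsInter K N) ∧
  GenericUnique K

/-- There is an isomorphism from `cl^N(range c)` onto `cl^N(range d)` sending
the tuple `c` to the tuple `d` (the characterization of equality of the Galois
types of `c` and `d` over `∅` in `N`, in a class admitting intersections). -/
def ClTupleIso (K : AECStr L Ω) (N : ModelOn L Ω) {n : ℕ}
    (c d : Fin n → Ω) : Prop :=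
  ∃ M₁ M₂ : ModelOn L Ω, K.le M₁ N ∧ K.le M₂ N ∧
    M₁.1 = aecCl K N (Set.range c) ∧ M₂.1 = aecCl K N (Set.range d) ∧
    ∃ g : ↥M₁.1 ≃[L] ↥M₂.1,
      ∀ (x : ↥M₁.1) (i : Fin n), (x : Ω) = c i → ((g x : Ω)) = d i

/-- `φ` restricts to an isomorphism from `M₁` onto `M₂`. -/
def IsoFn (M₁ M₂ : ModelOn L Ω) (φ : Ω → Ω) : Prop :=
  ∃ g : ↥M₁.1 ≃[L] ↥M₂.1, ∀ x : ↥M₁.1, (g x : Ω) = φ x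

theorem IsoFn.comp {M₁ M₂ M₃ : ModelOn L Ω} {φ ψ : Ω → Ω}
    (h : IsoFn M₁ M₂ φ) (h' : IsoFn M₂ M₃ ψ) : IsoFn M₁ M₃ (ψ ∘ φ) := by
  obtain ⟨g, hg⟩ := h
  obtain ⟨g', hg'⟩ := h'
  refine ⟨g'.comp g, fun x => ?_⟩
  simp [hg, hg']

theorem IsoFn.ex_of {M₁ M₂ : ModelOn L Ω} (g : ↥M₁.1 ≃[L] ↥M₂.1) :
    ∃ φ : Ω → Ω, ∀ x : ↥M₁.1, (g x : Ω) = φ x := by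
  classical
  refine ⟨fun y => if h : y ∈ M₁.1 then (g ⟨y, h⟩ : Ω) else y, fun x => ?_⟩
  simp

theorem IsoFn.symm {M₁ M₂ : ModelOn L Ω} {φ : Ω → Ω} (h : IsoFn M₁ M₂ φ) :
    ∃ ψ, IsoFn M₂ M₁ ψ ∧ (∀ x ∈ M₁.1, ψ (φ x) = x) ∧ (∀ y ∈ M₂.1, φ (ψ y) = y) := by
  obtain ⟨g, hg⟩ := h
  obtain ⟨ψ, hψ⟩ := IsoFn.ex_of g.symm
  refine ⟨ψ, ⟨g.symm, hψ⟩, fun x hx => ?_, fun y hy => ?_⟩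
  · have := hg ⟨x, hx⟩
    simp only at this
    rw [← this, ← hψ, g.symm_apply_apply]
  · have := hψ ⟨y, hy⟩
    simp only at this
    rw [← this, ← hg, g.apply_symm_apply]

theorem IsoFn.congr {M₁ M₂ : ModelOn L Ω} {φ ψ : Ω → Ω} (h : IsoFn M₁ M₂ φ)
    (e : ∀ x ∈ M₁.1, φ x = ψ x) : IsoFn M₁ M₂ ψ := by
  obtain ⟨g, hg⟩ := h
  exact ⟨g, fun x => (hg x).trans (e x x.2)⟩

theorem IsoFn.mapsTo {M₁ M₂ : ModelOn L Ω} {φ : Ω → Ω} (h : IsoFn M₁ M₂ φ)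
    {x : Ω} (hx : x ∈ M₁.1) : φ x ∈ M₂.1 := by
  obtain ⟨g, hg⟩ := h
  have := hg ⟨x, hx⟩
  simp only at this
  rw [← this]
  exact (g ⟨x, hx⟩).2

theorem IsoFn.injOn {M₁ M₂ : ModelOn L Ω} {φ : Ω → Ω} (h : IsoFn M₁ M₂ φ) :
    Set.InjOn φ M₁.1 := by
  obtain ⟨ψ, -, h1, -⟩ := h.symm
  intro x hx y hy e
  rw [← h1 x hx, ← h1 y hy, e]

theorem IsoFn.image {M₁ M₂ : ModelOn L Ω} {φ : Ω → Ω} (h : IsoFn M₁ M₂ φ) :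
    φ '' M₁.1 = M₂.1 := by
  obtain ⟨ψ, h0, h1, h2⟩ := h.symm
  ext y
  constructor
  · rintro ⟨x, hx, rfl⟩
    exact h.mapsTo hx
  · intro hy
    exact ⟨ψ y, h0.mapsTo hy, h2 y hy⟩

theorem IsoFn.restrict (K : AECStr L Ω) {M' M₁ M₂ : ModelOn L Ω} {φ : Ω → Ω}
    (h : IsoFn M₁ M₂ φ) (hle : K.le M' M₁) : ∃ M'', K.le M'' M₂ ∧ IsoFn M' M'' φ := by
  obtain ⟨g, hg⟩ := h
  obtain ⟨M'', g', h1, h2⟩ := K.iso_resp hle g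
  refine ⟨M'', h1, g', fun x => ?_⟩
  rw [h2 x ⟨x, (K.le_isSub hle).1 x.2⟩ rfl, hg]

theorem IsoFn.eq_of_id {P Q : ModelOn L Ω} (h : IsoFn P Q id) : P = Q := by
  obtain ⟨g, hg⟩ := h
  obtain ⟨s, S⟩ := P
  obtain ⟨t, T⟩ := Q
  have hst : s = t := by
    have := (IsoFn.image (M₁ := ⟨s, S⟩) (M₂ := ⟨t, T⟩) ⟨g, hg⟩)
    simpa using this
  subst hst
  have hgid : ∀ x, g x = x := fun x => Subtype.ext (hg x)
  have : S = T := by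
    refine FirstOrder.Language.Structure.ext ?_ ?_
    · funext n f x
      have h1 := @FirstOrder.Language.Equiv.map_fun' L s s S T g n f x
      have h2 : ((@FirstOrder.Language.Equiv.toEquiv L s s S T g).toFun ∘ x) = x := funext fun i => hgid (x i)
      rw [h2] at h1
      exact (hgid _).symm.trans h1
    · funext n f x
      have h1 := @FirstOrder.Language.Equiv.map_rel' L s s S T g n f x
      have h2 : ((@FirstOrder.Language.Equiv.toEquiv L s s S T g).toFun ∘ x) = x := funext fun i => hgid (x i)
      rw [h2] at h1
      exact propext h1.symm
  rw [this]

theorem IsoFn.transport (N : ModelOn L Ω) {φ : Ω → Ω} (h : Set.InjOn φ N.1) :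
    ∃ N', IsoFn N N' φ := by
  let e : ↥N.1 ≃ ↥(φ '' N.1) := Equiv.Set.imageOfInjOn φ N.1 h
  refine ⟨⟨φ '' N.1, e.inducedStructure⟩, ?_⟩
  exact ⟨@Equiv.inducedStructureEquiv L _ _ _ e, fun x => rfl⟩

section cl
variable (K : AECStr L Ω)

theorem subset_cl (N : ModelOn L Ω) (A : Set Ω) : A ⊆ aecCl K N A :=
  fun _ hx _ _ hA => hA hx

theorem cl_mono (N : ModelOn L Ω) {A B : Set Ω} (h : A ⊆ B) : aecCl K N A ⊆ aecCl K N B :=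
  fun _ hx M hM hB => hx M hM (h.trans hB)

theorem cl_min (N : ModelOn L Ω) {A B : Set Ω} (h : A ⊆ aecCl K N B) :
    aecCl K N A ⊆ aecCl K N B :=
  fun _ hx M hM hB => hx M hM (fun _ ha => h ha M hM hB)

theorem cl_sub_model {N P : ModelOn L Ω} {A : Set Ω} (hP : K.le P N) (h : A ⊆ P.1) :
    aecCl K N A ⊆ P.1 := fun _ hx => hx P hP h

theorem cl_eq_of_le {N P : ModelOn L Ω} {A : Set Ω} (hN : AdmitsInter K N) (hP : K.le P N)
    (h : A ⊆ P.1) : aecCl K P A = aecCl K N A := by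
  apply Set.Subset.antisymm
  · obtain ⟨Q, hQ, hQe⟩ := hN A (h.trans (K.le_isSub hP).1)
    have : K.le Q P := K.coherence hQ hP (by rw [hQe]; exact cl_sub_model K hP h)
    have h2 := cl_sub_model K this (A := A) (by rw [hQe]; exact subset_cl K N A)
    rwa [hQe] at h2
  · exact fun x hx M hM hA => hx M (K.le_trans hM hP) hA

theorem IsoFn.cl {M₁ M₂ : ModelOn L Ω} {φ : Ω → Ω} (h : IsoFn M₁ M₂ φ)
    (hM₁ : M₁ ∈ K.mem)
    {A : Set Ω} (hA : A ⊆ M₁.1) {x : Ω} (hx : x ∈ aecCl K M₁ A) :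
    φ x ∈ aecCl K M₂ (φ '' A) := by
  intro P hP hAP
  obtain ⟨ψ, h0, h1, h2⟩ := h.symm
  obtain ⟨P', hP', hi⟩ := h0.restrict K hP
  have : x ∈ P'.1 := by
    refine hx P' hP' (fun a ha => ?_)
    rw [← h1 a (hA ha)]
    exact hi.mapsTo (hAP ⟨a, ha, rfl⟩)
  rw [← hi.image] at this
  obtain ⟨p, hp, rfl⟩ := this
  rwa [h2 p ((K.le_isSub hP).1 hp)]

/-- closures are preserved, computed in an ambient model admitting intersections -/
theorem IsoFn.cl' {N M₁ M₂ : ModelOn L Ω} {φ : Ω → Ω} (h : IsoFn M₁ M₂ φ)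
    (hN : AdmitsInter K N) (h₁ : K.le M₁ N) (h₂ : K.le M₂ N)
    {A : Set Ω} (hA : A ⊆ M₁.1) {x : Ω} (hx : x ∈ aecCl K N A) :
    φ x ∈ aecCl K N (φ '' A) := by
  rw [← cl_eq_of_le K hN h₁ hA] at hx
  have := h.cl K (K.le_mem_left h₁) hA hx
  rwa [cl_eq_of_le K hN h₂] at this
  rintro _ ⟨a, ha, rfl⟩
  exact h.mapsTo (hA ha)

/-- image of a closure -/
theorem IsoFn.image_cl {M₁ M₂ : ModelOn L Ω} {φ : Ω → Ω} (h : IsoFn M₁ M₂ φ)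
    (hM₁ : M₁ ∈ K.mem) (hM₂ : M₂ ∈ K.mem)
    {A : Set Ω} (hA : A ⊆ M₁.1) :
    φ '' aecCl K M₁ A = aecCl K M₂ (φ '' A) := by
  apply Set.Subset.antisymm
  · rintro _ ⟨x, hx, rfl⟩
    exact h.cl K hM₁ hA hx
  · intro y hy
    have hA' : φ '' A ⊆ M₂.1 := by
      rintro _ ⟨a, ha, rfl⟩
      exact h.mapsTo (hA ha)
    have hy2 : y ∈ M₂.1 := cl_sub_model K (K.le_refl _ hM₂) hA' hy
    obtain ⟨ψ, h0, h1, h2⟩ := h.symm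
    refine ⟨ψ y, ?_, h2 y hy2⟩
    have := h0.cl K hM₂ hA' hy
    rw [Set.image_image] at this
    convert this using 1
    congr 1
    ext a
    constructor
    · intro ha
      exact ⟨a, ha, h1 a (hA ha)⟩
    · rintro ⟨b, hb, rfl⟩
      simp only [h1 b (hA hb)]
      exact hb

theorem countable_sub (hLS : K.LS = ℵ₀) {M : ModelOn L Ω} (hM : M ∈ K.mem) {A : Set Ω}
    (hA : A ⊆ M.1) (hc : A.Countable) : ∃ M₀, K.le M₀ M ∧ A ⊆ M₀.1 ∧ #M₀.1 ≤ ℵ₀ := by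
  obtain ⟨M₀, h1, h2, h3⟩ := K.LST M hM A hA
  refine ⟨M₀, h1, h2, h3.trans ?_⟩
  rw [hLS]
  have : #A ≤ ℵ₀ := Cardinal.le_aleph0_iff_set_countable.2 hc
  calc #A + ℵ₀ ≤ ℵ₀ + ℵ₀ := by gcongr
    _ = ℵ₀ := Cardinal.aleph0_add_aleph0

theorem cl_eq_of_countable (hK : IsQuasiminimal K) {N M : ModelOn L Ω} (hN : K.le N M)
    (hc : #N.1 ≤ ℵ₀) {A : Set Ω} (hA : A ⊆ N.1) : aecCl K N A = aecCl K M A := by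
  obtain ⟨hLS, -, hI, -⟩ := hK
  apply Set.Subset.antisymm
  · intro x hx P hP hAP
    have hNc : N.1.Countable := Cardinal.le_aleph0_iff_set_countable.1 hc
    obtain ⟨P', hP', hAP', hPc⟩ := countable_sub K hLS (K.le_mem_left hP) hAP (hNc.mono hA)
    have hP'c : P'.1.Countable := Cardinal.le_aleph0_iff_set_countable.1 hPc
    have hP'M := K.le_trans hP' hP
    obtain ⟨Q, hQ, hsub, hQc⟩ := countable_sub K hLS (K.le_mem_right hN)
      (Set.union_subset (K.le_isSub hN).1 (K.le_isSub hP'M).1) (hNc.union hP'c)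
    have hNQ : K.le N Q := K.coherence hN hQ (Set.subset_union_left.trans hsub)
    have hPQ : K.le P' Q := K.coherence hP'M hQ (Set.subset_union_right.trans hsub)
    rw [cl_eq_of_le K (hI Q (K.le_mem_left hQ) hQc) hNQ hA] at hx
    exact (K.le_isSub hP').1 (cl_sub_model K hPQ hAP' hx)
  · exact fun x hx M hM hA => hx M (K.le_trans hM hN) hA

/-- exchange -/
theorem cl_exchange (hK : IsQuasiminimal K) {N : ModelOn L Ω} (hN : N ∈ K.mem)
    (hc : #N.1 ≤ ℵ₀) {A : Set Ω} (hA : A ⊆ N.1) {b d : Ω} (hb : b ∈ N.1) (hd : d ∈ N.1)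
    (h1 : b ∈ aecCl K N (insert d A)) (h2 : b ∉ aecCl K N A) :
    d ∈ aecCl K N (insert b A) := by
  obtain ⟨hLS, -, hI, hG⟩ := hK
  have hIN := hI N hN hc
  by_contra hdP
  obtain ⟨B, hBA, hB⟩ := zorn_subset_nonempty
    {S : Set Ω | (∃ Q, K.le Q N ∧ Q.1 = S) ∧ A ⊆ S ∧ b ∉ S ∧ S ⊆ aecCl K N (insert b A)}
    (by
      intro c hcS hchain hne
      choose F hF using fun S : c => (hcS S.2).1
      obtain ⟨U, hU1, hU2, hU3⟩ := K.chain_union (ι := c) F hne.to_subtype (by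
        rintro ⟨S, hS⟩ ⟨T, hT⟩
        rcases hchain.total hS hT with h | h
        · refine ⟨⟨T, hT⟩, K.coherence (hF ⟨S, hS⟩).1 (hF ⟨T, hT⟩).1 ?_, K.le_refl _ (K.le_mem_left (hF ⟨T, hT⟩).1)⟩
          rw [(hF ⟨S, hS⟩).2, (hF ⟨T, hT⟩).2]
          exact h
        · refine ⟨⟨S, hS⟩, K.le_refl _ (K.le_mem_left (hF ⟨S, hS⟩).1), K.coherence (hF ⟨T, hT⟩).1 (hF ⟨S, hS⟩).1 ?_⟩
          rw [(hF ⟨S, hS⟩).2, (hF ⟨T, hT⟩).2]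
          exact h)
      have hUe : U.1 = ⋃₀ c := by
        rw [hU1, Set.sUnion_eq_iUnion]
        exact Set.iUnion_congr fun i => (hF i).2
      refine ⟨⋃₀ c, ⟨⟨U, hU3 N (fun i => (hF i).1), hUe⟩, ?_, ?_, ?_⟩,
        fun s hs => Set.subset_sUnion_of_mem hs⟩
      · obtain ⟨s, hs⟩ := hne
        exact (hcS hs).2.1.trans (Set.subset_sUnion_of_mem hs)
      · rintro ⟨s, hs, hbs⟩
        exact (hcS hs).2.2.1 hbs
      · exact Set.sUnion_subset fun s hs => (hcS hs).2.2.2)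
    (aecCl K N A) (by
      obtain ⟨Q, hQ, hQe⟩ := hIN A hA
      exact ⟨⟨Q, hQ, hQe⟩, subset_cl K N A, h2, cl_mono K N (Set.subset_insert _ _)⟩)
  obtain ⟨⟨Q, hQ, rfl⟩, hAQ, hbQ, hQP⟩ := hB.prop
  obtain ⟨M₁, M₂, hM₁, hM₂, e₁, e₂, g, hg1, hg2⟩ := hG Q N N hQ hQ hc hc d b
    ⟨hd, fun h => hdP (hQP h)⟩ ⟨hb, hbQ⟩
  obtain ⟨φ, hφ⟩ := IsoFn.ex_of g
  have hiso : IsoFn M₁ M₂ φ := ⟨g, hφ⟩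
  have hQM₁ : Q.1 ⊆ M₁.1 := by
    rw [e₁]; exact Set.subset_union_left.trans (subset_cl K N _)
  have hdM₁ : d ∈ M₁.1 := by
    rw [e₁]; exact subset_cl K N _ (Or.inr rfl)
  have hφQ : ∀ x ∈ Q.1, φ x = x := fun x hx => by
    exact (hφ ⟨x, hQM₁ hx⟩).symm.trans (hg1 ⟨x, hQM₁ hx⟩ hx)
  have hφd : φ d = b := by rw [← hg2 ⟨d, hdM₁⟩ rfl, hφ]
  have hM₂P : M₂.1 ⊆ aecCl K N (insert b A) := by
    rw [e₂]
    apply cl_min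
    rintro x (hx | rfl)
    · exact hQP hx
    · exact subset_cl K N _ (Set.mem_insert _ _)
  have hbM₁ : b ∈ M₁.1 := by
    rw [e₁]
    refine cl_mono K N ?_ h1
    rintro x (rfl | hx)
    · exact Or.inr rfl
    · exact Or.inl (hAQ hx)
  have hcM₂ : φ b ∈ M₂.1 := hiso.mapsTo hbM₁
  have hcQ : φ b ∉ Q.1 := fun h => by
    have := hiso.injOn (hQM₁ h) hbM₁ (hφQ _ h)
    rw [this] at h
    exact hbQ h
  have hbC : b ∈ aecCl K N (insert (φ b) Q.1) := by
    by_contra hbn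
    have hcN : φ b ∈ N.1 := (K.le_isSub hM₂).1 hcM₂
    obtain ⟨R, hR, hRe⟩ := hIN (insert (φ b) Q.1)
      (Set.insert_subset hcN (K.le_isSub hQ).1)
    have hQR : Q.1 ⊆ aecCl K N (insert (φ b) Q.1) :=
      (Set.subset_insert _ _).trans (subset_cl K N _)
    have := hB.le_of_ge (y := aecCl K N (insert (φ b) Q.1))
      ⟨⟨R, hR, hRe⟩, hAQ.trans hQR, hbn, cl_min K N (Set.insert_subset (hM₂P hcM₂) hQP)⟩ hQR
    exact hcQ (this (subset_cl K N _ (Set.mem_insert _ _)))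
  obtain ⟨ψ, h0, h3, h4⟩ := hiso.symm
  have hQM₂ : Q.1 ⊆ M₂.1 := by
    rw [e₂]; exact Set.subset_union_left.trans (subset_cl K N _)
  have key := h0.cl' K hIN hM₂ hM₁ (Set.insert_subset hcM₂ hQM₂) hbC
  have hψb : ψ b = d := by rw [← hφd, h3 d hdM₁]
  rw [hψb] at key
  refine hdP (cl_min K N ?_ key)
  rintro _ ⟨x, (rfl | hx), rfl⟩
  · rw [h3 b hbM₁]
    exact subset_cl K N _ (Set.mem_insert _ _)
  · have : ψ x = x := by
      conv_lhs => rw [← hφQ x hx]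
      exact h3 x (hQM₁ hx)
    rw [this]
    exact hQP hx

end cl

/-- Steinitz -/
theorem steinitz {α : Type*} [DecidableEq α] (C : Set α → Set α) (X : Set α)
    (sub : ∀ A, A ⊆ C A) (mono : ∀ A B, A ⊆ B → C A ⊆ C B)
    (idem : ∀ A B, A ⊆ C B → C A ⊆ C B)
    (exch : ∀ A ⊆ X, ∀ b ∈ X, ∀ d ∈ X, b ∈ C (insert d A) → b ∉ C A → d ∈ C (insert b A))
    (J : Finset α) (hJ : (J : Set α) ⊆ X) :
    ∀ (n : ℕ) (I : Finset α), (I : Set α) ⊆ X → (I \ J).card = n →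
      (∀ x ∈ I, x ∉ C (↑(I.erase x))) → (I : Set α) ⊆ C J → I.card ≤ J.card := by
  intro n
  induction n with
  | zero =>
    intro I hI hn _ _
    rw [Finset.card_eq_zero, Finset.sdiff_eq_empty_iff_subset] at hn
    exact Finset.card_le_card hn
  | succ n ih =>
    intro I hI hn hind hsp
    have hne : (I \ J).Nonempty := by
      rw [← Finset.card_pos]; omega
    obtain ⟨x, hx⟩ := hne
    rw [Finset.mem_sdiff] at hx
    have : ∃ y ∈ J, y ∉ C (↑(I.erase x)) := by
      by_contra hcon
      push Not at hcon
      exact hind x hx.1 (idem _ _ (fun y hy => hcon y hy) (hsp hx.1))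
    obtain ⟨y, hyJ, hy⟩ := this
    have hyI : y ∉ I.erase x := fun h => hy (sub _ h)
    have hcard : (insert y (I.erase x)).card = I.card := by
      rw [Finset.card_insert_of_notMem hyI, Finset.card_erase_of_mem hx.1]
      have := Finset.card_pos.2 ⟨x, hx.1⟩
      omega
    rw [← hcard]
    apply ih
    · intro z hz
      simp only [Finset.coe_insert, Set.mem_insert_iff, Finset.mem_coe, Finset.mem_erase] at hz
      rcases hz with rfl | hz
      · exact hJ hyJ
      · exact hI hz.2
    · have : insert y (I.erase x) \ J = (I \ J).erase x := by
        ext z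
        simp only [Finset.mem_sdiff, Finset.mem_insert, Finset.mem_erase]
        constructor
        · rintro ⟨rfl | h, h'⟩
          · exact absurd hyJ h'
          · exact ⟨h.1, h.2, h'⟩
        · rintro ⟨h, h', h''⟩
          exact ⟨Or.inr ⟨h, h'⟩, h''⟩
      rw [this, Finset.card_erase_of_mem (Finset.mem_sdiff.2 hx), hn]
      rfl
    · intro z hz hzc
      rcases Finset.mem_insert.1 hz with rfl | hz'
      · rw [Finset.erase_insert hyI] at hzc
        exact hy hzc
      · have hzy : z ≠ y := fun h => hyI (h ▸ hz')
        have hzI := Finset.mem_of_mem_erase hz'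
        have hE : (↑((insert y (I.erase x)).erase z) : Set α)
            = insert y (↑((I.erase x).erase z) : Set α) := by
          rw [Finset.erase_insert_of_ne hzy.symm, Finset.coe_insert]
        rw [hE] at hzc
        have h1 := exch (↑((I.erase x).erase z)) (fun w hw => hI (Finset.mem_of_mem_erase
          (Finset.mem_of_mem_erase hw))) z (hI hzI) y (hJ hyJ) hzc
          (fun h => hind z hzI (mono _ _ (by
            intro w hw
            simp only [Finset.mem_coe, Finset.mem_erase] at hw ⊢
            tauto) h))
        rw [← Finset.coe_insert, Finset.insert_erase hz'] at h1
        exact hy h1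
    · intro z hz
      simp only [Finset.coe_insert, Set.mem_insert_iff, Finset.mem_coe, Finset.mem_erase] at hz
      rcases hz with rfl | hz
      · exact sub _ hyJ
      · exact hsp hz.2

/-- A finitely generated countable model is not isomorphic to a proper submodel. -/
theorem no_proper (K : AECStr L Ω) (hK : IsQuasiminimal K) {N M₁ : ModelOn L Ω}
    (hc : #N.1 ≤ ℵ₀) (hM₁ : K.le M₁ N) {φ : Ω → Ω} (h : IsoFn N M₁ φ)
    (S₀ : Finset Ω) (hS₀ : (S₀ : Set Ω) ⊆ N.1) (hgen : N.1 ⊆ aecCl K N S₀) : N.1 ⊆ M₁.1 := by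
  classical
  have hN := K.le_mem_right hM₁
  have hIN := hK.2.2.1 N hN hc
  have hex : ∃ n : ℕ, ∃ S : Finset Ω, (S : Set Ω) ⊆ N.1 ∧ N.1 ⊆ aecCl K N S ∧ S.card = n :=
    ⟨_, S₀, hS₀, hgen, rfl⟩
  obtain ⟨S, hSN, hSg, hScard⟩ := Nat.find_spec hex
  have hmin := fun m hm => Nat.find_min hex (m := m) hm
  have hind : ∀ x ∈ S, x ∉ aecCl K N (↑(S.erase x)) := by
    intro x hx hxc
    refine hmin (S.erase x).card (by rw [← hScard]; exact Finset.card_erase_lt_of_mem hx)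
      ⟨S.erase x, fun y hy => hSN (Finset.mem_of_mem_erase hy), ?_, rfl⟩
    refine hSg.trans (cl_min K N ?_)
    intro y hy
    by_cases hyx : y = x
    · rw [hyx]; exact hxc
    · exact subset_cl K N _ (Finset.mem_coe.2 (Finset.mem_erase.2 ⟨hyx, hy⟩))
  intro x hxN
  by_contra hxM
  obtain ⟨ψ, h0, h1, h2⟩ := h.symm
  have hNN := K.le_refl N hN
  have hM₁N := (K.le_isSub hM₁).1
  set T := S.image φ with hT
  have hTM : (T : Set Ω) ⊆ M₁.1 := by
    intro y hy
    obtain ⟨s, hs, rfl⟩ := Finset.mem_image.1 hy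
    exact h.mapsTo (hSN hs)
  have hTcard : T.card = S.card := Finset.card_image_of_injOn (h.injOn.mono hSN)
  have hTind : ∀ y ∈ T, y ∉ aecCl K N (↑(T.erase y)) := by
    intro y hy hyc
    obtain ⟨s, hs, rfl⟩ := Finset.mem_image.1 hy
    have := h0.cl' K hIN hM₁ hNN (fun z hz => hTM (Finset.mem_of_mem_erase hz)) hyc
    rw [h1 s (hSN hs)] at this
    refine hind s hs (cl_mono K N ?_ this)
    rintro _ ⟨z, hz, rfl⟩
    obtain ⟨hz1, hz2⟩ := Finset.mem_erase.1 (Finset.mem_coe.1 hz)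
    obtain ⟨t, ht, rfl⟩ := Finset.mem_image.1 hz2
    rw [h1 t (hSN ht)]
    exact Finset.mem_coe.2 (Finset.mem_erase.2 ⟨fun e => hz1 (by rw [e]), ht⟩)
  have hxT : x ∉ aecCl K N T := fun hh => hxM (cl_sub_model K hM₁ hTM hh)
  have hxT' : x ∉ T := fun hh => hxM (hTM hh)
  have exch : ∀ A ⊆ N.1, ∀ b ∈ N.1, ∀ d ∈ N.1, b ∈ aecCl K N (insert d A) →
      b ∉ aecCl K N A → d ∈ aecCl K N (insert b A) :=
    fun A hA b hb d hd => cl_exchange K hK hN hc hA hb hd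
  have hle := steinitz (aecCl K N) N.1 (subset_cl K N) (fun A B => cl_mono K N)
    (fun A B => cl_min K N) exch S hSN _ (insert x T)
    (by rw [Finset.coe_insert]; exact Set.insert_subset hxN (hTM.trans hM₁N)) rfl
    (by
      intro y hy hyc
      rcases Finset.mem_insert.1 hy with rfl | hyT
      · rw [Finset.erase_insert hxT'] at hyc
        exact hxT hyc
      · have hxy : x ≠ y := fun e => hxT' (e ▸ hyT)
        rw [Finset.erase_insert_of_ne hxy, Finset.coe_insert] at hyc
        have := exch _ (fun w hw => hM₁N (hTM (Finset.mem_of_mem_erase hw))) y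
          (hM₁N (hTM hyT)) x hxN hyc (hTind y hyT)
        rw [← Finset.coe_insert, Finset.insert_erase hyT] at this
        exact hxT this)
    (by rw [Finset.coe_insert]; exact (Set.insert_subset hxN (hTM.trans hM₁N)).trans hSg)
  rw [Finset.card_insert_of_notMem hxT', hTcard] at hle
  omega

/-- Make room: jointly embed two copies of a countable set over a partial bijection. -/
theorem make_room (X A B : Set Ω) (hc : X.Countable) (hA : A ⊆ X) (hB : B ⊆ X)
    (φ ψ : Ω → Ω) (hφ : ∀ x ∈ A, φ x ∈ B) (hψ : ∀ x ∈ B, ψ x ∈ A)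
    (h1 : ∀ x ∈ A, ψ (φ x) = x) (h2 : ∀ x ∈ B, φ (ψ x) = x) :
    ∃ e₁ e₂ : Ω → Ω, Set.InjOn e₁ X ∧ Set.InjOn e₂ X ∧ ∀ x ∈ A, e₂ (φ x) = e₁ x := by
  classical
  rcases X.finite_or_infinite with hfin | hinf
  · have := hfin.to_subtype
    let e : {x : X // (x : Ω) ∈ A} ≃ {x : X // (x : Ω) ∈ B} :=
      { toFun := fun x => ⟨⟨φ x.1.1, hB (hφ _ x.2)⟩, hφ _ x.2⟩
        invFun := fun x => ⟨⟨ψ x.1.1, hA (hψ _ x.2)⟩, hψ _ x.2⟩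
        left_inv := fun x => Subtype.ext (Subtype.ext (h1 _ x.2))
        right_inv := fun x => Subtype.ext (Subtype.ext (h2 _ x.2)) }
    refine ⟨fun x => if h : x ∈ X then (e.extendSubtype ⟨x, h⟩ : X) else x, id, ?_,
      Set.injOn_id _, ?_⟩
    · intro x hx y hy hxy
      simp only [hx, hy, dif_pos] at hxy
      have := e.extendSubtype.injective (Subtype.ext hxy)
      exact congrArg Subtype.val this
    · intro x hx
      simp only [hA hx, dif_pos, id]
      rw [Equiv.extendSubtype_apply_of_mem e ⟨x, hA hx⟩ hx]
      rfl
  · have : Infinite X := hinf.to_subtype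
    have : Countable X := hc.to_subtype
    obtain ⟨u⟩ : Nonempty (X ≃ ℕ) := nonempty_equiv_of_countable
    let ev : Ω → Ω := fun x => if h : x ∈ X then (u.symm (2 * u ⟨x, h⟩) : X) else x
    let od : Ω → Ω := fun x => if h : x ∈ X then (u.symm (2 * u ⟨x, h⟩ + 1) : X) else x
    have hev : Set.InjOn ev X := by
      intro x hx y hy hxy
      simp only [ev, hx, hy, dif_pos] at hxy
      have := u.symm.injective (Subtype.ext hxy)
      have := u.injective (by omega : u ⟨x, hx⟩ = u ⟨y, hy⟩)
      exact congrArg Subtype.val this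
    have hod : Set.InjOn od X := by
      intro x hx y hy hxy
      simp only [od, hx, hy, dif_pos] at hxy
      have := u.symm.injective (Subtype.ext hxy)
      have := u.injective (by omega : u ⟨x, hx⟩ = u ⟨y, hy⟩)
      exact congrArg Subtype.val this
    have hdis : ∀ x ∈ X, ∀ y ∈ X, ev x ≠ od y := by
      intro x hx y hy hxy
      simp only [ev, od, hx, hy, dif_pos] at hxy
      have := u.symm.injective (Subtype.ext hxy)
      omega
    refine ⟨ev, fun x => if x ∈ B then ev (ψ x) else od x, hev, ?_, ?_⟩
    · intro x hx y hy hxy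
      by_cases hxB : x ∈ B <;> by_cases hyB : y ∈ B <;> simp only [hxB, hyB, if_true, if_false] at hxy
      · have := hev (hA (hψ _ hxB)) (hA (hψ _ hyB)) hxy
        rw [← h2 x hxB, ← h2 y hyB, this]
      · exact absurd hxy (hdis _ (hA (hψ _ hxB)) _ hy)
      · exact absurd hxy.symm (hdis _ (hA (hψ _ hyB)) _ hx)
      · exact hod hx hy hxy
    · intro x hx
      simp only [hφ x hx, if_true, h1 x hx]

/-- Uniqueness of the generic type transported along an isomorphism of the base. -/
theorem generic_iso (K : AECStr L Ω) (hK : IsQuasiminimal K) {N M₁ M₂ : ModelOn L Ω}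
    (hc : #N.1 ≤ ℵ₀) (hM₁ : K.le M₁ N) (hM₂ : K.le M₂ N) {φ : Ω → Ω} (h : IsoFn M₁ M₂ φ)
    {b d : Ω} (hb : b ∈ N.1) (hd : d ∈ N.1) (hbM : b ∉ M₁.1) (hdM : d ∉ M₂.1) :
    ∃ P₁ P₂ χ, K.le P₁ N ∧ K.le P₂ N ∧ P₁.1 = aecCl K N (M₁.1 ∪ {b}) ∧
      P₂.1 = aecCl K N (M₂.1 ∪ {d}) ∧ IsoFn P₁ P₂ χ ∧ (∀ x ∈ M₁.1, χ x = φ x) ∧ χ b = d := by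
  have hN := K.le_mem_right hM₁
  have hM₁N := (K.le_isSub hM₁).1
  have hM₂N := (K.le_isSub hM₂).1
  obtain ⟨ψ, h0, h1, h2⟩ := h.symm
  obtain ⟨e₁, e₂, he₁, he₂, he⟩ := make_room N.1 M₁.1 M₂.1
    (Cardinal.le_aleph0_iff_set_countable.1 hc) hM₁N hM₂N φ ψ (fun x => h.mapsTo)
    (fun x => h0.mapsTo) h1 h2
  obtain ⟨N₁, i₁⟩ := IsoFn.transport N he₁
  obtain ⟨N₂, i₂⟩ := IsoFn.transport N he₂
  obtain ⟨Q, hQ, j₁⟩ := i₁.restrict K hM₁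
  obtain ⟨Q', hQ', j₂⟩ := i₂.restrict K hM₂
  obtain ⟨f₁, k₁, k₁a, k₁b⟩ := i₁.symm
  obtain ⟨f₂, k₂, k₂a, k₂b⟩ := i₂.symm
  obtain ⟨f, l, la, lb⟩ := j₁.symm
  have hQQ : Q = Q' := by
    apply IsoFn.eq_of_id
    refine (l.comp (h.comp j₂)).congr ?_
    intro x hx
    simp only [Function.comp, id]
    rw [he _ (l.mapsTo hx), lb x hx]
  subst hQQ
  have c₁ : #N₁.1 ≤ ℵ₀ := by
    rw [← i₁.image]; exact Cardinal.mk_image_le.trans hc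
  have c₂ : #N₂.1 ≤ ℵ₀ := by
    rw [← i₂.image]; exact Cardinal.mk_image_le.trans hc
  have hn₁ : e₁ b ∉ Q.1 := by
    rw [← j₁.image]
    rintro ⟨x, hx, hxe⟩
    exact hbM (he₁ (hM₁N hx) hb hxe ▸ hx)
  have hn₂ : e₂ d ∉ Q.1 := by
    rw [← j₂.image]
    rintro ⟨x, hx, hxe⟩
    exact hdM (he₂ (hM₂N hx) hd hxe ▸ hx)
  obtain ⟨R₁, R₂, hR₁, hR₂, r₁, r₂, g, hg1, hg2⟩ := hK.2.2.2 Q N₁ N₂ hQ hQ' c₁ c₂ (e₁ b) (e₂ d)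
    ⟨i₁.mapsTo hb, hn₁⟩ ⟨i₂.mapsTo hd, hn₂⟩
  obtain ⟨γ, hγ⟩ := IsoFn.ex_of g
  have hiso : IsoFn R₁ R₂ γ := ⟨g, hγ⟩
  obtain ⟨P₁, hP₁, p₁⟩ := k₁.restrict K hR₁
  obtain ⟨P₂, hP₂, p₂⟩ := k₂.restrict K hR₂
  have E₁ : R₁.1 = e₁ '' aecCl K N (M₁.1 ∪ {b}) := by
    rw [r₁, i₁.image_cl K hN (K.le_mem_right hQ) (Set.union_subset hM₁N (by simpa using hb)),
      Set.image_union, j₁.image, Set.image_singleton]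
  have E₂ : R₂.1 = e₂ '' aecCl K N (M₂.1 ∪ {d}) := by
    rw [r₂, i₂.image_cl K hN (K.le_mem_right hQ') (Set.union_subset hM₂N (by simpa using hd)),
      Set.image_union, j₂.image, Set.image_singleton]
  have s₁ : aecCl K N (M₁.1 ∪ {b}) ⊆ N.1 :=
    cl_sub_model K (K.le_refl N hN) (Set.union_subset hM₁N (by simpa using hb))
  have s₂ : aecCl K N (M₂.1 ∪ {d}) ⊆ N.1 :=
    cl_sub_model K (K.le_refl N hN) (Set.union_subset hM₂N (by simpa using hd))
  have F₁ : P₁.1 = aecCl K N (M₁.1 ∪ {b}) := by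
    rw [← p₁.image, E₁, Set.image_image]
    exact (Set.image_congr fun x hx => k₁a x (s₁ hx)).trans (Set.image_id' _)
  have F₂ : P₂.1 = aecCl K N (M₂.1 ∪ {d}) := by
    rw [← p₂.image, E₂, Set.image_image]
    exact (Set.image_congr fun x hx => k₂a x (s₂ hx)).trans (Set.image_id' _)
  obtain ⟨q, p₁', qa, qb⟩ := p₁.symm
  have hqe : ∀ x ∈ P₁.1, q x = e₁ x := by
    intro x hx
    have hx' := hx
    rw [F₁] at hx'
    have : e₁ x ∈ R₁.1 := by rw [E₁]; exact ⟨x, hx', rfl⟩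
    rw [← qa _ this, k₁a x (s₁ hx')]
  have hM₁P : ∀ x ∈ M₁.1, x ∈ P₁.1 := fun x hx => by
    rw [F₁]; exact subset_cl K N _ (Or.inl hx)
  have hbP : b ∈ P₁.1 := by
    rw [F₁]; exact subset_cl K N _ (Or.inr rfl)
  refine ⟨P₁, P₂, f₂ ∘ (γ ∘ q), hP₁, hP₂, F₁, F₂, (p₁'.comp hiso).comp p₂, ?_, ?_⟩
  · intro x hx
    simp only [Function.comp]
    rw [hqe x (hM₁P x hx)]
    have hr : e₁ x ∈ R₁.1 := hqe x (hM₁P x hx) ▸ p₁'.mapsTo (hM₁P x hx)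
    have : γ (e₁ x) = e₁ x := by
      exact (hγ ⟨e₁ x, hr⟩).symm.trans (hg1 ⟨e₁ x, hr⟩ (j₁.mapsTo hx))
    rw [this, ← he x hx, k₂a _ (hM₂N (h.mapsTo hx))]
  · simp only [Function.comp]
    rw [hqe b hbP]
    have hr : e₁ b ∈ R₁.1 := hqe b hbP ▸ p₁'.mapsTo hbP
    have : γ (e₁ b) = e₂ d := by
      rw [← hg2 ⟨e₁ b, hr⟩ rfl, hγ]
    rw [this, k₂a _ hd]

theorem ClTupleIso_iff (K : AECStr L Ω) (N : ModelOn L Ω) {n : ℕ} (c d : Fin n → Ω) :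
    ClTupleIso K N c d ↔ ∃ M₁ M₂ φ, K.le M₁ N ∧ K.le M₂ N ∧
    M₁.1 = aecCl K N (Set.range c) ∧ M₂.1 = aecCl K N (Set.range d) ∧ IsoFn M₁ M₂ φ ∧
      ∀ i, φ (c i) = d i := by
  constructor
  · rintro ⟨M₁, M₂, h1, h2, e1, e2, g, hg⟩
    obtain ⟨φ, hφ⟩ := IsoFn.ex_of g
    refine ⟨M₁, M₂, φ, h1, h2, e1, e2, ⟨g, hφ⟩, fun i => ?_⟩
    have hi : c i ∈ M₁.1 := by rw [e1]; exact subset_cl K N _ ⟨i, rfl⟩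
    rw [← hg ⟨c i, hi⟩ i rfl, hφ]
  · rintro ⟨M₁, M₂, φ, h1, h2, e1, e2, ⟨g, hφ⟩, h⟩
    refine ⟨M₁, M₂, h1, h2, e1, e2, g, fun x i hx => ?_⟩
    rw [hφ, hx, h]

theorem one_step (K : AECStr L Ω) (hK : IsQuasiminimal K) {N : ModelOn L Ω} (hN : N ∈ K.mem)
    (hc : #N.1 ≤ ℵ₀) {n : ℕ} (a₁ a₂ : Fin n → Ω) (b : Ω)
    (ha₁ : Set.range a₁ ⊆ N.1) (ha₂ : Set.range a₂ ⊆ N.1) (hb : b ∈ N.1)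
    (h : ClTupleIso K N a₁ a₂) :
    ∃ d ∈ N.1, ClTupleIso K N (Fin.snoc a₁ b : Fin (n + 1) → Ω) (Fin.snoc a₂ d) := by
  classical
  rw [ClTupleIso_iff] at h
  obtain ⟨M₁, M₂, φ, hM₁, hM₂, e₁, e₂, hi, hφ⟩ := h
  have clins : ∀ (M : ModelOn L Ω) (a : Fin n → Ω) (x : Ω), M.1 = aecCl K N (Set.range a) →
      aecCl K N (M.1 ∪ {x}) = aecCl K N (Set.range (Fin.snoc a x : Fin (n + 1) → Ω)) := by
    intro M a x hM
    rw [Fin.range_snoc, hM]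
    apply Set.Subset.antisymm
    · apply cl_min
      apply Set.union_subset
      · exact cl_mono K N (Set.subset_insert _ _)
      · rintro _ rfl
        exact subset_cl K N _ (Set.mem_insert _ _)
    · apply cl_mono
      rintro y (rfl | hy)
      · exact Or.inr rfl
      · exact Or.inl (subset_cl K N _ hy)
  have clin : ∀ (M : ModelOn L Ω), K.le M N → ∀ x ∈ M.1, aecCl K N (M.1 ∪ {x}) = M.1 := by
    intro M hM x hx
    have : M.1 ∪ {x} = M.1 := by simpa using hx
    rw [this]
    exact Set.Subset.antisymm (cl_sub_model K hM subset_rfl) (subset_cl K N _)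
  by_cases hbM : b ∈ M₁.1
  · refine ⟨φ b, (K.le_isSub hM₂).1 (hi.mapsTo hbM), ?_⟩
    rw [ClTupleIso_iff]
    refine ⟨M₁, M₂, φ, hM₁, hM₂, ?_, ?_, hi, ?_⟩
    · rw [← clins M₁ a₁ b e₁, clin M₁ hM₁ b hbM]
    · rw [← clins M₂ a₂ _ e₂, clin M₂ hM₂ _ (hi.mapsTo hbM)]
    · intro i
      refine Fin.lastCases ?_ (fun i => ?_) i
      · simp
      · simp [hφ]
  · have : ∃ d ∈ N.1, d ∉ M₂.1 := by
      by_contra hcon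
      push Not at hcon
      obtain ⟨ψ, h0, h1, h2⟩ := hi.symm
      have hset : M₂.1 = N.1 := Set.Subset.antisymm (K.le_isSub hM₂).1 hcon
      have hMN : M₂ = N := by
        apply K.le_antisymm hM₂
        exact K.coherence (K.le_refl N hN) hM₂ hcon
      subst hMN
      refine hbM (no_proper K hK hc hM₁ h0 (Finset.univ.image a₂) ?_ ?_ hb)
      · simpa using ha₂
      · conv_lhs => rw [e₂]
        simp
    obtain ⟨d, hd, hdM⟩ := this
    refine ⟨d, hd, ?_⟩
    obtain ⟨P₁, P₂, χ, hP₁, hP₂, E₁, E₂, hχ, hχφ, hχb⟩ :=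
      generic_iso K hK hc hM₁ hM₂ hi hb hd hbM hdM
    rw [ClTupleIso_iff]
    refine ⟨P₁, P₂, χ, hP₁, hP₂, ?_, ?_, hχ, ?_⟩
    · rw [← clins M₁ a₁ b e₁, E₁]
    · rw [← clins M₂ a₂ _ e₂, E₂]
    · intro i
      refine Fin.lastCases ?_ (fun i => ?_) i
      · simp [hχb]
      · simp only [Fin.snoc_castSucc]
        rw [hχφ, hφ]
        rw [e₁]
        exact subset_cl K N _ ⟨i, rfl⟩

theorem append_snoc_aux {α : Type*} {n m : ℕ} (a : Fin n → α) (b : Fin m → α) (x : α) :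
    Fin.append a (Fin.snoc b x : Fin (m + 1) → α)
      = (Fin.snoc (Fin.append a b) x : Fin (n + m + 1) → α) := by
  rw [Fin.snoc_eq_append, Fin.snoc_eq_append, Fin.append_assoc]
  rfl

theorem many_step (K : AECStr L Ω) (hK : IsQuasiminimal K) {N : ModelOn L Ω} (hN : N ∈ K.mem)
    (hc : #N.1 ≤ ℵ₀) {n : ℕ} (a₁ a₂ : Fin n → Ω)
    (ha₁ : Set.range a₁ ⊆ N.1) (ha₂ : Set.range a₂ ⊆ N.1)
    (h : ClTupleIso K N a₁ a₂) (m : ℕ) : ∀ (b₁ : Fin m → Ω), Set.range b₁ ⊆ N.1 →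
    ∃ b₂ : Fin m → Ω, Set.range b₂ ⊆ N.1 ∧
      ClTupleIso K N (Fin.append a₁ b₁) (Fin.append a₂ b₂) := by
  have rapp : ∀ (k : ℕ) (a : Fin n → Ω) (b : Fin k → Ω), Set.range a ⊆ N.1 →
      Set.range b ⊆ N.1 → Set.range (Fin.append a b) ⊆ N.1 := by
    rintro k a b ha hb _ ⟨i, rfl⟩
    refine Fin.addCases (fun i => ?_) (fun i => ?_) i
    · rw [Fin.append_left]; exact ha ⟨i, rfl⟩
    · rw [Fin.append_right]; exact hb ⟨i, rfl⟩
  induction m with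
  | zero =>
    intro b₁ _
    refine ⟨b₁, by simp, ?_⟩
    have e : b₁ = Fin.elim0 := Subsingleton.elim _ _
    subst e
    rw [Fin.append_elim0, Fin.append_elim0]
    exact h
  | succ m ih =>
    intro b₁ hb₁
    have hb₁' : Set.range (Fin.init b₁) ⊆ N.1 := by
      rintro _ ⟨i, rfl⟩
      exact hb₁ ⟨_, rfl⟩
    obtain ⟨b₂, hb₂, h2⟩ := ih (Fin.init b₁) hb₁'
    obtain ⟨d, hd, h3⟩ := one_step K hK hN hc _ _ (b₁ (Fin.last m))
      (rapp _ _ _ ha₁ hb₁') (rapp _ _ _ ha₂ hb₂) (hb₁ ⟨_, rfl⟩) h2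
    refine ⟨Fin.snoc b₂ d, ?_, ?_⟩
    · rw [Fin.range_snoc]; exact Set.insert_subset hd hb₂
    · rw [← append_snoc_aux, ← append_snoc_aux, Fin.snoc_init_self] at h3
      exact h3

/-- Finite homogeneity of models of a quasiminimal AEC: if the finite tuples
`ā₁`, `ā₂` from `M` have the same Galois type over `∅` in `M` (equivalently,
there is an isomorphism from `cl^M(ā₁)` onto `cl^M(ā₂)` sending `ā₁` to `ā₂`),
then for any finite tuple `b̄₁` from `M` there is a finite tuple `b̄₂` from `M`
such that `ā₁b̄₁` and `ā₂b̄₂` have the same Galois type over `∅` in `M`. -/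
theorem stmt18 (K : AECStr L Ω) (hK : IsQuasiminimal K)
    (M : ModelOn L Ω) (hM : M ∈ K.mem) (n m : ℕ)
    (a₁ a₂ : Fin n → Ω) (b₁ : Fin m → Ω)
    (ha₁ : Set.range a₁ ⊆ M.1) (ha₂ : Set.range a₂ ⊆ M.1)
    (hb₁ : Set.range b₁ ⊆ M.1)
    (h : ClTupleIso K M a₁ a₂) :
    ∃ b₂ : Fin m → Ω, Set.range b₂ ⊆ M.1 ∧
      ClTupleIso K M (Fin.append a₁ b₁) (Fin.append a₂ b₂) := by
  obtain ⟨N, hNM, hsub, hc⟩ := countable_sub K hK.1 hM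
    (Set.union_subset (Set.union_subset ha₁ ha₂) hb₁)
    (((Set.countable_range a₁).union (Set.countable_range a₂)).union (Set.countable_range b₁))
  have s₁ : Set.range a₁ ⊆ N.1 := fun x hx => hsub (Or.inl (Or.inl hx))
  have s₂ : Set.range a₂ ⊆ N.1 := fun x hx => hsub (Or.inl (Or.inr hx))
  have s₃ : Set.range b₁ ⊆ N.1 := fun x hx => hsub (Or.inr hx)
  have rapp : ∀ (a : Fin n → Ω) (b : Fin m → Ω), Set.range a ⊆ N.1 →
      Set.range b ⊆ N.1 → Set.range (Fin.append a b) ⊆ N.1 := by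
    rintro a b ha hb _ ⟨i, rfl⟩
    refine Fin.addCases (fun i => ?_) (fun i => ?_) i
    · rw [Fin.append_left]; exact ha ⟨i, rfl⟩
    · rw [Fin.append_right]; exact hb ⟨i, rfl⟩
  have h' : ClTupleIso K N a₁ a₂ := by
    obtain ⟨M₁, M₂, h1, h2, e1, e2, hg⟩ := h
    refine ⟨M₁, M₂, K.coherence h1 hNM ?_, K.coherence h2 hNM ?_, ?_, ?_, hg⟩
    · rw [e1]; exact cl_sub_model K hNM s₁
    · rw [e2]; exact cl_sub_model K hNM s₂
    · rw [e1, cl_eq_of_countable K hK hNM hc s₁]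
    · rw [e2, cl_eq_of_countable K hK hNM hc s₂]
  obtain ⟨b₂, hb₂, M₁, M₂, h1, h2, e1, e2, hg⟩ :=
    many_step K hK (K.le_mem_left hNM) hc a₁ a₂ s₁ s₂ h' m b₁ s₃
  refine ⟨b₂, hb₂.trans (K.le_isSub hNM).1, M₁, M₂, K.le_trans h1 hNM, K.le_trans h2 hNM,
    ?_, ?_, hg⟩
  · rw [e1, cl_eq_of_countable K hK hNM hc (rapp _ _ s₁ s₃)]
  · rw [e2, cl_eq_of_countable K hK hNM hc (rapp _ _ s₂ hb₂)]
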